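/- arXiv:2510.04993 — 2 statements merged into one kernel-verified Lean document; each statement's English description precedes it below -/
import Mathlib

section
/- Let k ≥ 1 and let π be a permutation gate in 𝒞₃ on n qubits such that some coordinate of the polynomial representation of π contains a monomial of degree at least k. Then n ≥ 2ᵏ − 1. Moreover, for each k ≥ 3 this bound is attained: there is a permutation gate in 𝒞₃ on exactly 2ᵏ−1 qubits with a degree-k monomial in its polynomial representation. -/
/-! Common framework: qubit gates, the Pauli group, the Clifford hierarchy,
permutation gates, Toffoli gates and staircase form, descending multiplications,
multilinear polynomial representations. -/

/-- Vectors in `𝔽₂ⁿ`, indexing computational basis states. -/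
abbrev QV (n : ℕ) := Fin n → ZMod 2

/-- `n`-qubit gates: `2ⁿ × 2ⁿ` complex matrices indexed by `𝔽₂ⁿ`. -/
abbrev QMat (n : ℕ) := Matrix (QV n) (QV n) ℂ

/-- Standard basis vector `eᵢ` of `𝔽₂ⁿ`. -/
def stdBasis (n : ℕ) (i : Fin n) : QV n := fun m => if m = i then 1 else 0

/-- The gate `X^u Z^z`, sending `|b⟩` to `(-1)^(z·b) |b+u⟩`. -/
noncomputable def XZGate (n : ℕ) (u z : QV n) : QMat n :=
  fun a b => if a = b + u then (-1 : ℂ) ^ (∑ i, (z i).val * (b i).val) else 0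

/-- The Pauli group on `n` qubits: gates `c·P₁⊗⋯⊗Pₙ`, `c ∈ {±1, ±i}`,
`Pᵢ ∈ {I,X,Y,Z}`, equivalently phases times `X^u Z^z`. -/
def PauliGroup (n : ℕ) : Set (QMat n) :=
  { P | ∃ (c : ℂ) (u z : QV n),
      (c = 1 ∨ c = -1 ∨ c = Complex.I ∨ c = -Complex.I) ∧ P = c • XZGate n u z }

/-- Level `k` of the Clifford hierarchy `𝒞ₖ` (level 1 is the Pauli group,
level 2 the Clifford group; level 0 is junk/empty). -/
def CliffordLevel (n : ℕ) : ℕ → Set (QMat n)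
  | 0 => ∅
  | 1 => PauliGroup n
  | (k+2) => { U | U ∈ Matrix.unitaryGroup (QV n) ℂ ∧
      ∀ P ∈ PauliGroup n, U * P * star U ∈ CliffordLevel n (k+1) }

/-- The permutation gate of a permutation `f` of `𝔽₂ⁿ`: sends `|v⟩` to `|f v⟩`. -/
noncomputable def permGate (n : ℕ) (f : QV n ≃ QV n) : QMat n :=
  fun a b => if a = f b then 1 else 0

/-- A diagonal gate. -/
def IsDiagonal (n : ℕ) (d : QMat n) : Prop := ∀ a b : QV n, a ≠ b → d a b = 0

/-- A gate is semi-Clifford if it equals `φ₁ d φ₂` for Clifford `φ₁, φ₂` and diagonal `d`. -/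
def IsSemiClifford (n : ℕ) (U : QMat n) : Prop :=
  ∃ φ₁ d φ₂ : QMat n, φ₁ ∈ CliffordLevel n 2 ∧ φ₂ ∈ CliffordLevel n 2 ∧
    IsDiagonal n d ∧ U = φ₁ * d * φ₂

/-- The underlying map of the Toffoli gate `TOF_{i,j,k}`: `v ↦ v + (vᵢvⱼ)·eₖ`. -/
def tofFun (n : ℕ) (i j k : Fin n) (v : QV n) : QV n :=
  fun m => if m = k then v m + v i * v j else v m

/-- A map on `𝔽₂ⁿ` is in staircase form if it is a product (applied left-to-right)
of pairwise distinct Toffoli gates `TOF_{i,j,k}` with `i<j<k` and with targets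
nondecreasing in the order the gates are applied. -/
def IsStaircase (n : ℕ) (g : QV n → QV n) : Prop :=
  ∃ L : List (Fin n × Fin n × Fin n),
    L.Nodup ∧
    (∀ t ∈ L, t.1 < t.2.1 ∧ t.2.1 < t.2.2) ∧
    List.Chain' (fun s t => s.2.2 ≤ t.2.2) L ∧
    g = fun v => L.foldl (fun w t => tofFun n t.1 t.2.1 t.2.2 w) v

/-- A descending multiplication on `𝔽₂ⁿ`: bilinear, associative, commutative,
`eᵢeᵢ = 0`, and for `i < j`, `eᵢeⱼ ∈ span{eₖ : k > j}`. -/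
def IsDescendingMul (n : ℕ) (mul : QV n → QV n → QV n) : Prop :=
  (∀ u v w : QV n, mul (u + v) w = mul u w + mul v w) ∧
  (∀ u v w : QV n, mul u (v + w) = mul u v + mul u w) ∧
  (∀ u v w : QV n, mul (mul u v) w = mul u (mul v w)) ∧
  (∀ u v : QV n, mul u v = mul v u) ∧
  (∀ i : Fin n, mul (stdBasis n i) (stdBasis n i) = 0) ∧
  (∀ i j : Fin n, i < j → ∀ m : Fin n, m ≤ j → mul (stdBasis n i) (stdBasis n j) m = 0)

/-- The product `∏_{i ∈ l} eᵢ` under a multiplication, for a list `l` (junk `0` on `[]`). -/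
def dmProdList (n : ℕ) (mul : QV n → QV n → QV n) : List (Fin n) → QV n
  | [] => 0
  | [i] => stdBasis n i
  | i :: j :: rest => mul (stdBasis n i) (dmProdList n mul (j :: rest))

/-- The product `∏_{i ∈ T} eᵢ` under a multiplication. -/
def dmProd (n : ℕ) (mul : QV n → QV n → QV n) (T : Finset (Fin n)) : QV n :=
  dmProdList n mul (T.sort (· ≤ ·))

/-- `g` is the map `∑_{i∈S} eᵢ ↦ ∑_{∅≠T⊆S} ∏_{i∈T} eᵢ` associated to a multiplication. -/
def dmPiSpec (n : ℕ) (mul : QV n → QV n → QV n) (g : QV n → QV n) : Prop :=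
  ∀ S : Finset (Fin n),
    g (∑ i ∈ S, stdBasis n i) = ∑ T ∈ S.powerset.erase ∅, dmProd n mul T

/-- The bilinear extension of `eᵢeⱼ := g(eᵢ+eⱼ) + eᵢ + eⱼ`. -/
def inducedMul (n : ℕ) (g : QV n → QV n) (u v : QV n) : QV n :=
  ∑ i : Fin n, ∑ j : Fin n,
    (u i * v j) • (g (stdBasis n i + stdBasis n j) + stdBasis n i + stdBasis n j)

/-- Coefficient of the monomial `∏_{i∈T} aᵢ` in the unique multilinear polynomial
over `𝔽₂` representing `g : 𝔽₂ⁿ → 𝔽₂` (Möbius inversion over `𝔽₂`). -/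
def mlCoeff (n : ℕ) (g : QV n → ZMod 2) (T : Finset (Fin n)) : ZMod 2 :=
  ∑ R ∈ T.powerset, g (∑ i ∈ R, stdBasis n i)

/-- Strictly lower triangular matrix. -/
def StrictLowerTri (n : ℕ) (A : Matrix (Fin n) (Fin n) (ZMod 2)) : Prop :=
  ∀ p q : Fin n, p ≤ q → A p q = 0

/-- Multiplication of basis vectors for the gate `U_k`: the basis of `𝔽₂^(2^k-1)` is
indexed by nonempty subsets `S ⊆ [k]`, encoded as indices `a` via the binary digits of
`a+1`; `e_S e_T = e_{S∪T}` if `S ∩ T = ∅` and `e_S e_T = 0` otherwise. -/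
def ukBasisMul (k : ℕ) (a b : Fin (2 ^ k - 1)) : QV (2 ^ k - 1) :=
  if (a.val + 1) &&& (b.val + 1) = 0 then
    (if h : a.val + b.val + 1 < 2 ^ k - 1 then stdBasis (2 ^ k - 1) ⟨a.val + b.val + 1, h⟩
     else 0)
  else 0

/-- The descending multiplication defining `U_k`, extended bilinearly. -/
def ukMul (k : ℕ) (u v : QV (2 ^ k - 1)) : QV (2 ^ k - 1) :=
  ∑ a : Fin (2 ^ k - 1), ∑ b : Fin (2 ^ k - 1), (u a * v b) • ukBasisMul k a b

theorem std_sub (n : ℕ) (v : QV n) : v + v = 0 := by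
  funext i; exact CharTwo.add_self_eq_zero (v i)

/-- The sign character of `ZMod 2`. -/
noncomputable def sgn2 (a : ZMod 2) : ℂ := (-1 : ℂ) ^ a.val

theorem sgn2_natCast (m : ℕ) : sgn2 (m : ZMod 2) = (-1 : ℂ) ^ m := by
  unfold sgn2
  rw [ZMod.val_natCast, ← neg_one_pow_eq_pow_mod_two]

theorem sgn2_add (a b : ZMod 2) : sgn2 (a + b) = sgn2 a * sgn2 b := by
  have h : a + b = ((a.val + b.val : ℕ) : ZMod 2) := by simp
  rw [h, sgn2_natCast, pow_add]; rfl

theorem sgn2_zero : sgn2 0 = 1 := by simp [sgn2]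

theorem sgn2_star (a : ZMod 2) : star (sgn2 a) = sgn2 a := by simp [sgn2]

theorem sgn2_sq (a : ZMod 2) : sgn2 a * sgn2 a = 1 := by
  rw [← sgn2_add, CharTwo.add_self_eq_zero, sgn2_zero]

theorem sgn2_cases (a : ZMod 2) : sgn2 a = 1 ∨ sgn2 a = -1 := by
  unfold sgn2; exact neg_one_pow_eq_or ℂ _

/-- Permutation gates with signs. -/
noncomputable def sPerm (n : ℕ) (g : QV n ≃ QV n) (φ : QV n → ZMod 2) : QMat n :=
  fun a b => if a = g b then sgn2 (φ b) else 0

theorem permGate_eq (n : ℕ) (f : QV n ≃ QV n) : permGate n f = sPerm n f (fun _ => 0) := by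
  ext a b; simp [permGate, sPerm, sgn2_zero]

theorem XZGate_eq (n : ℕ) (u z : QV n) :
    XZGate n u z = sPerm n (Equiv.addRight u) (fun b => ∑ i, z i * b i) := by
  ext a b
  have h : (∑ i, z i * b i) = ((∑ i, (z i).val * (b i).val : ℕ) : ZMod 2) := by simp
  simp only [XZGate, sPerm, Equiv.coe_addRight]
  rw [h, sgn2_natCast]
  congr

theorem sPerm_mul (n : ℕ) (g h : QV n ≃ QV n) (φ ψ : QV n → ZMod 2) :
    sPerm n g φ * sPerm n h ψ = sPerm n (h.trans g) (fun b => φ (h b) + ψ b) := by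
  ext a b
  simp only [Matrix.mul_apply, sPerm, sgn2_add, Equiv.trans_apply]
  rw [Finset.sum_eq_single (h b)]
  · simp
  · intro c _ hc; simp [hc]
  · simp

theorem sPerm_star (n : ℕ) (g : QV n ≃ QV n) (φ : QV n → ZMod 2) :
    star (sPerm n g φ) = sPerm n g.symm (fun b => φ (g.symm b)) := by
  ext a b
  simp only [Matrix.star_apply, sPerm]
  by_cases h : b = g a
  · subst h; simp [sgn2_star]
  · have : a ≠ g.symm b := fun h' => h (by simp [h'])
    simp [h, this]

theorem sPerm_one (n : ℕ) : sPerm n (Equiv.refl _) (fun _ => 0) = 1 := by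
  ext a b; simp [sPerm, sgn2_zero, Matrix.one_apply]

theorem sPerm_unitary (n : ℕ) (g : QV n ≃ QV n) (φ : QV n → ZMod 2) :
    sPerm n g φ ∈ Matrix.unitaryGroup (QV n) ℂ := by
  rw [Matrix.mem_unitaryGroup_iff, sPerm_star, sPerm_mul, ← sPerm_one]
  congr 1
  · simp
  · funext b; exact CharTwo.add_self_eq_zero _

/-- Conjugating a translation gate by `f`. -/
theorem perm_conj (n : ℕ) (f : QV n ≃ QV n) (u : QV n) :
    permGate n f * XZGate n u 0 * star (permGate n f) =
      permGate n ((f.symm.trans (Equiv.addRight u)).trans f) := by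
  rw [permGate_eq, permGate_eq, XZGate_eq, sPerm_star, sPerm_mul, sPerm_mul]
  congr 1
  funext b; simp

theorem XZ_mem (n : ℕ) (u z : QV n) : XZGate n u z ∈ PauliGroup n :=
  ⟨1, u, z, Or.inl rfl, by simp⟩

theorem pauli_perm (n : ℕ) (g : QV n ≃ QV n) (h : permGate n g ∈ PauliGroup n) :
    ∃ u, ∀ b, g b = b + u := by
  obtain ⟨c, u, z, _, h⟩ := h
  refine ⟨u, fun b => ?_⟩
  have := congrFun (congrFun h (g b)) b
  by_contra hb
  simp [permGate, XZGate, hb] at this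

theorem clifford_perm (n : ℕ) (g : QV n ≃ QV n) (h : permGate n g ∈ CliffordLevel n 2) :
    ∀ x w, g (x + w) = g x + g w + g 0 := by
  intro x w
  have := h.2 _ (XZ_mem n w 0)
  rw [perm_conj] at this
  obtain ⟨u, hu⟩ := pauli_perm n _ this
  have h1 := hu (g x)
  have h2 := hu (g 0)
  simp at h1 h2
  rw [h1, h2, ← add_assoc, add_assoc (g x + g 0), add_comm u, ← add_assoc, add_assoc (g x),
    std_sub, add_zero]

theorem c3_affine (n : ℕ) (f : QV n ≃ QV n) (h : permGate n f ∈ CliffordLevel n 3) (u : QV n) :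
    ∃ L : QV n →ₗ[ZMod 2] QV n, ∀ x y, f (x + u) + f (y + u) = L (f x + f y) := by
  have h1 := h.2 _ (XZ_mem n u 0)
  rw [perm_conj] at h1
  have h2 := clifford_perm n _ h1
  set g := (f.symm.trans (Equiv.addRight u)).trans f with hg
  have hgx : ∀ x, f (x + u) = g (f x) := fun x => by simp [hg]
  have hL : ∀ x y, g (x + y) + g 0 = (g x + g 0) + (g y + g 0) := by
    intro x y
    rw [h2]; abel
  refine ⟨(AddMonoidHom.mk' (fun x => g x + g 0) hL).toZModLinearMap 2, fun x y => ?_⟩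
  rw [hgx, hgx]
  simp [h2 (f x) (f y), add_assoc, std_sub]

/-- Vector-valued Möbius coefficient. -/
def vCoeff (n : ℕ) (f : QV n → QV n) (S : Finset (Fin n)) : QV n :=
  ∑ R ∈ S.powerset, f (∑ i ∈ R, stdBasis n i)

theorem vCoeff_insert (n : ℕ) (f : QV n → QV n) (S : Finset (Fin n)) (i : Fin n) (hi : i ∉ S) :
    vCoeff n f (insert i S) = ∑ R ∈ S.powerset, (f (∑ j ∈ R, stdBasis n j) +
      f (∑ j ∈ R, stdBasis n j + stdBasis n i)) := by
  unfold vCoeff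
  rw [Finset.sum_powerset_insert hi, Finset.sum_add_distrib]
  congr 1
  refine Finset.sum_congr rfl fun R hR => ?_
  rw [Finset.sum_insert (fun h => hi (Finset.mem_powerset.1 hR h)), add_comm]

theorem vCoeff_step (n : ℕ) (f : QV n ≃ QV n) (h : permGate n f ∈ CliffordLevel n 3) (i : Fin n) :
    ∃ N : QV n →ₗ[ZMod 2] QV n, ∀ S : Finset (Fin n), S.Nonempty →
      N (vCoeff n f S) = if i ∈ S then 0 else vCoeff n f (insert i S) := by
  obtain ⟨L, hL⟩ := c3_affine n f h (stdBasis n i)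
  refine ⟨L + LinearMap.id, fun S hS => ?_⟩
  rw [LinearMap.add_apply, LinearMap.id_apply]
  split_ifs with hi
  · obtain ⟨S', hi', rfl⟩ : ∃ S', i ∉ S' ∧ insert i S' = S :=
      ⟨S.erase i, by simp, Finset.insert_erase hi⟩
    rw [vCoeff_insert n f S' i hi', map_sum, ← Finset.sum_add_distrib]
    refine Finset.sum_eq_zero fun R _ => ?_
    rw [← hL, add_assoc (∑ j ∈ R, _), std_sub, add_zero, add_comm (f _), std_sub]
  · obtain ⟨j, hj⟩ := hS
    obtain ⟨S', hj', rfl⟩ : ∃ S', j ∉ S' ∧ insert j S' = S :=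
      ⟨S.erase j, by simp, Finset.insert_erase hj⟩
    have hLS : L (vCoeff n f (insert j S')) =
        ∑ R ∈ (insert j S').powerset, f (∑ j ∈ R, stdBasis n j + stdBasis n i) := by
      rw [vCoeff_insert n f S' j hj', map_sum, Finset.sum_powerset_insert hj',
        ← Finset.sum_add_distrib]
      refine Finset.sum_congr rfl fun R hR => ?_
      rw [← hL, Finset.sum_insert (fun h => hj' (Finset.mem_powerset.1 hR h)),
        add_comm (stdBasis n j)]
    rw [hLS, vCoeff_insert n f _ i hi, Finset.sum_add_distrib, add_comm]
    rfl

theorem vCoeff_multi (n : ℕ) (f : QV n ≃ QV n) (h : permGate n f ∈ CliffordLevel n 3)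
    (R : Finset (Fin n)) :
    ∃ N : QV n →ₗ[ZMod 2] QV n, ∀ S : Finset (Fin n), S.Nonempty →
      N (vCoeff n f S) = if Disjoint R S then vCoeff n f (R ∪ S) else 0 := by
  induction R using Finset.induction_on with
  | empty => exact ⟨LinearMap.id, fun S _ => by simp⟩
  | insert i R hi ih =>
    obtain ⟨N, hN⟩ := ih
    obtain ⟨M, hM⟩ := vCoeff_step n f h i
    refine ⟨M.comp N, fun S hS => ?_⟩
    rw [LinearMap.comp_apply, hN S hS]
    by_cases hd : Disjoint R S
    · rw [if_pos hd, hM _ (hS.mono Finset.subset_union_right)]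
      by_cases hiS : i ∈ S
      · simp [hiS]
      · simp [hiS, hi, hd, Finset.insert_union]
    · simp [hd, Finset.disjoint_insert_left]

theorem part1 (k n : ℕ) (f : QV n ≃ QV n) (h : permGate n f ∈ CliffordLevel n 3)
    (m : Fin n) (T : Finset (Fin n)) (hk : k ≤ T.card)
    (hT : mlCoeff n (fun v => f v m) T ≠ 0) : 2 ^ k - 1 ≤ n := by
  have hT' : vCoeff n f T ≠ 0 := by
    intro h0
    apply hT
    have := congrFun h0 m
    simpa [vCoeff, mlCoeff, Finset.sum_apply] using this
  have hli : LinearIndependent (ZMod 2)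
      (fun S : {S // S ∈ T.powerset.erase ∅} => vCoeff n f S.1) := by
    rw [Fintype.linearIndependent_iff]
    intro c hc
    have key : ∀ d : ℕ, ∀ S : {S // S ∈ T.powerset.erase ∅}, S.1.card = d → c S = 0 := by
      intro d
      induction d using Nat.strong_induction_on with
      | _ d ih =>
        intro S hSd
        obtain ⟨N, hN⟩ := vCoeff_multi n f h (T \ S.1)
        have hne : ∀ S : {S // S ∈ T.powerset.erase ∅}, S.1.Nonempty := fun S =>
          Finset.nonempty_iff_ne_empty.2 (Finset.mem_erase.1 S.2).1
        have hsub : ∀ S : {S // S ∈ T.powerset.erase ∅}, S.1 ⊆ T := fun S =>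
          Finset.mem_powerset.1 (Finset.mem_erase.1 S.2).2
        have h1 := congrArg N hc
        rw [map_sum, map_zero, Finset.sum_eq_single S] at h1
        · rw [map_smul, hN _ (hne S), if_pos Finset.sdiff_disjoint,
            Finset.sdiff_union_of_subset (hsub S)] at h1
          exact (smul_eq_zero.1 h1).resolve_right hT'
        · intro S' _ hS'
          rw [map_smul, hN _ (hne S')]
          split_ifs with hd
          · have hss : S'.1 ⊆ S.1 := by
              intro x hx
              by_contra hxS
              exact Finset.disjoint_left.1 hd (Finset.mem_sdiff.2 ⟨hsub S' hx, hxS⟩) hx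
            have hlt : S'.1.card < d := by
              rw [← hSd]
              exact Finset.card_lt_card (hss.ssubset_of_ne fun e => hS' (Subtype.ext e))
            rw [ih _ hlt S' rfl, zero_smul]
          · rw [smul_zero]
        · simp
    exact fun S => key _ S rfl
  have hcard := hli.fintype_card_le_finrank
  rw [Fintype.card_coe, Finset.card_erase_of_mem (by simp), Finset.card_powerset] at hcard
  simp at hcard
  have : 2 ^ k ≤ 2 ^ T.card := Nat.pow_le_pow_right (by norm_num) hk
  omega

theorem pauli_of (n : ℕ) (c : ℂ) (hc : c = 1 ∨ c = -1 ∨ c = Complex.I ∨ c = -Complex.I)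
    (g : QV n ≃ QV n) (φ : QV n → ZMod 2) (u : QV n) (hg : ∀ b, g b = b + u)
    (hφ : ∀ x y, φ (x + y) = φ x + φ y + φ 0) : c • sPerm n g φ ∈ PauliGroup n := by
  have hL : ∀ x y, φ (x + y) + φ 0 = (φ x + φ 0) + (φ y + φ 0) := by
    intro x y
    rw [hφ]; ring
  let L : QV n →ₗ[ZMod 2] ZMod 2 := (AddMonoidHom.mk' (fun x => φ x + φ 0) hL).toZModLinearMap 2
  refine ⟨c * sgn2 (φ 0), u, fun i => L (fun j => if i = j then 1 else 0), ?_, ?_⟩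
  · rcases sgn2_cases (φ 0) with h | h <;> rw [h] <;>
      rcases hc with rfl | rfl | rfl | rfl <;> simp
  · rw [XZGate_eq, mul_smul]
    congr 1
    have hg' : g = Equiv.addRight u := by ext1 b; exact hg b
    subst hg'
    ext a b
    have h1 : L b = φ b + φ 0 := rfl
    have h2 : φ b = φ 0 + L b := by
      rw [h1, add_comm (φ b), ← add_assoc, CharTwo.add_self_eq_zero, zero_add]
    rw [LinearMap.pi_apply_eq_sum_univ L b] at h2
    simp only [smul_eq_mul] at h2
    simp only [sPerm, Matrix.smul_apply, smul_eq_mul, mul_ite, mul_zero]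
    rw [h2, sgn2_add]
    simp only [mul_comm (b _)]

theorem phase_unit (c : ℂ) (hc : c = 1 ∨ c = -1 ∨ c = Complex.I ∨ c = -Complex.I) :
    c * star c = 1 := by
  rcases hc with rfl | rfl | rfl | rfl <;> simp

theorem c2_of (n : ℕ) (c : ℂ) (hc : c = 1 ∨ c = -1 ∨ c = Complex.I ∨ c = -Complex.I)
    (G : QV n ≃ QV n) (q : QV n → ZMod 2) (hG : ∀ x w, G (x + w) = G x + G w + G 0)
    (hq : ∀ x y w, q (x + y + w) =
      q (x + y) + q (x + w) + q (y + w) + q x + q y + q w + q 0) :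
    c • sPerm n G q ∈ CliffordLevel n 2 := by
  have hcc := phase_unit c hc
  have hstar : star (c • sPerm n G q) = star c • star (sPerm n G q) := star_smul _ _
  refine ⟨?_, ?_⟩
  · rw [Matrix.mem_unitaryGroup_iff, hstar, smul_mul_smul_comm, hcc, one_smul]
    exact Matrix.mem_unitaryGroup_iff.1 (sPerm_unitary n G q)
  · rintro _ ⟨d, w, l, hd, rfl⟩
    rw [hstar, smul_mul_smul_comm, smul_mul_smul_comm, mul_right_comm, hcc, one_mul,
      XZGate_eq, sPerm_star, sPerm_mul, sPerm_mul]
    have hGi : ∀ x y, G.symm (x + y) = G.symm x + G.symm y + G.symm 0 := by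
      intro x y
      apply G.injective
      rw [hG, hG]
      simp only [Equiv.apply_symm_apply, add_zero]
      rw [add_assoc, std_sub, add_zero]
    refine pauli_of n d hd _ _ (G w + G 0) ?_ ?_
    · intro b
      simp [hG, add_assoc]
    · intro x y
      have e1 : ∀ a b, q (a + b + G.symm 0 + w) + q (a + b + G.symm 0) =
          (q (a + w) + q a) + (q (b + w) + q b) + (q (G.symm 0 + w) + q (G.symm 0)) := by
        intro a b
        have h2 : (2 : ZMod 2) = 0 := rfl
        generalize G.symm 0 = o
        have A1 := hq (a + b) o w
        have A2 := hq a b w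
        linear_combination A1 + A2 + (q (a + b + o) + q (a + b) + q w + q 0) * h2
      simp only [Equiv.coe_addRight, hGi x y, mul_add, Finset.sum_add_distrib,
        Pi.add_apply]
      linear_combination e1 (G.symm x) (G.symm y)

theorem c3_of (n : ℕ) (f : QV n ≃ QV n)
    (haff : ∀ u x w, f (f.symm (x + w) + u) =
      f (f.symm x + u) + f (f.symm w + u) + f (f.symm 0 + u))
    (hq : ∀ x y w, f.symm (x + y + w) = f.symm (x + y) + f.symm (x + w) + f.symm (y + w)
      + f.symm x + f.symm y + f.symm w + f.symm 0) : permGate n f ∈ CliffordLevel n 3 := by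
  rw [permGate_eq]
  refine ⟨sPerm_unitary n f _, ?_⟩
  rintro _ ⟨c, u, z, hc, rfl⟩
  rw [mul_smul_comm, smul_mul_assoc, XZGate_eq, sPerm_star, sPerm_mul, sPerm_mul]
  refine c2_of n c hc _ _ ?_ ?_
  · intro x w
    simpa using haff u x w
  · intro x y w
    simp [hq x y w, mul_add, Finset.sum_add_distrib]

/-- The group algebra of `(ℤ/2)^k` over `𝔽₂`. -/
abbrev GA (k : ℕ) := MonoidAlgebra (ZMod 2) (Multiplicative (Fin k → ZMod 2))

/-- The augmentation. -/
noncomputable def gaug (k : ℕ) : GA k →ₐ[ZMod 2] ZMod 2 := MonoidAlgebra.lift _ _ _ 1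

theorem gaug_single (k : ℕ) (g : Multiplicative (Fin k → ZMod 2)) :
    gaug k (MonoidAlgebra.single g 1) = 1 := by
  simp [gaug]

theorem ga_two (k : ℕ) : (2 : GA k) = 0 := by
  have := congrArg (algebraMap (ZMod 2) (GA k)) (show (2 : ZMod 2) = 0 from rfl)
  rwa [map_ofNat, map_zero] at this

theorem ga_sq (k : ℕ) (a : GA k) : a * a = algebraMap (ZMod 2) (GA k) (gaug k a) := by
  have : CharP (GA k) 2 := charP_of_injective_algebraMap (algebraMap (ZMod 2) (GA k)).injective 2
  have : ExpChar (GA k) 2 := inferInstance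
  have h : frobenius (GA k) 2 = (algebraMap (ZMod 2) (GA k)).comp (gaug k : GA k →+* ZMod 2) := by
    apply MonoidAlgebra.ringHom_ext
    · intro r
      have hr : r ^ 2 = r := by revert r; decide
      have h1 : (MonoidAlgebra.single 1 r : GA k) = algebraMap (ZMod 2) (GA k) r := rfl
      rw [h1, frobenius_def, ← map_pow, hr]
      exact congrArg _ ((gaug k).commutes r).symm
    · intro g
      rw [frobenius_def, MonoidAlgebra.single_pow]
      have hg : g ^ 2 = 1 := by
        rw [pow_two]
        apply Multiplicative.toAdd.injective
        rw [toAdd_mul]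
        exact std_sub k _
      rw [hg]
      simp [gaug_single]
  have := RingHom.congr_fun h a
  rw [frobenius_def, pow_two] at this
  exact this

/-- The augmentation ideal. -/
noncomputable abbrev GI (k : ℕ) : Submodule (ZMod 2) (GA k) := LinearMap.ker (gaug k).toLinearMap

theorem GI_sq (k : ℕ) (x : GI k) : (x : GA k) * x = 0 := by
  have : gaug k x = 0 := x.2
  rw [ga_sq, this, map_zero]

theorem GI_finrank (k : ℕ) : Module.finrank (ZMod 2) (GI k) = 2 ^ k - 1 := by
  have h := LinearMap.finrank_range_add_finrank_ker (gaug k).toLinearMap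
  have hr : LinearMap.range (gaug k).toLinearMap = ⊤ := by
    rw [LinearMap.range_eq_top]
    intro r
    exact ⟨algebraMap _ _ r, (gaug k).commutes r⟩
  rw [hr, finrank_top, Module.finrank_self] at h
  have h2 : Module.finrank (ZMod 2) (GA k) = 2 ^ k := by
    rw [Module.finrank_eq_card_basis (MonoidAlgebra.basis _ (ZMod 2))]
    simp
  rw [h2] at h
  exact (Nat.eq_sub_of_add_eq' h)

/-- Units are the elements `1 + x`. -/
noncomputable def gUnits (k : ℕ) : GI k ≃ (GA k)ˣ where
  toFun x := ⟨1 + x, 1 + x, by linear_combination GI_sq k x + x * ga_two k,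
    by linear_combination GI_sq k x + x * ga_two k⟩
  invFun u := ⟨1 + u, by
    have h : IsUnit (gaug k u) := u.isUnit.map _
    have h2 : ∀ r : ZMod 2, IsUnit r → 1 + r = 0 := by
      intro r hr
      have := hr.ne_zero
      revert r; decide
    simpa using h2 _ h⟩
  left_inv x := by
    apply Subtype.ext
    simp only
    linear_combination ga_two k
  right_inv u := by
    apply Units.ext
    simp only
    linear_combination ga_two k

theorem gUnits_val (k : ℕ) (x : GI k) : ((gUnits k x : (GA k)ˣ) : GA k) = 1 + x := rfl

theorem gu_two (k : ℕ) (x : Additive (GA k)ˣ) : 2 • x = 0 := by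
  obtain ⟨y, hy⟩ := (gUnits k).surjective x.toMul
  apply Additive.toMul.injective
  rw [toMul_nsmul, ← hy]
  apply Units.ext
  rw [Units.val_pow_eq_pow_val, gUnits_val]
  change _ = (1 : GA k)
  linear_combination GI_sq k y + y * ga_two k

noncomputable instance gu_module (k : ℕ) : Module (ZMod 2) (Additive (GA k)ˣ) :=
  AddCommGroup.zmodModule (gu_two k)

instance GA_finite (k : ℕ) : Finite (GA k) :=
  Module.finite_of_finite (ZMod 2)

theorem gu_finrank (k : ℕ) : Module.finrank (ZMod 2) (Additive (GA k)ˣ) = 2 ^ k - 1 := by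
  have h1 : Nat.card (Additive (GA k)ˣ) = Nat.card (GI k) :=
    Nat.card_congr ((gUnits k).trans Additive.ofMul).symm
  rw [Module.natCard_eq_pow_finrank (K := ZMod 2) (V := Additive (GA k)ˣ),
    Module.natCard_eq_pow_finrank (K := ZMod 2) (V := GI k),
    GI_finrank] at h1
  exact Nat.pow_right_injective (by simp) h1

/-- Group elements inside the units. -/
noncomputable def gj (k : ℕ) : (Fin k → ZMod 2) →ₗ[ZMod 2] Additive (GA k)ˣ :=
  AddMonoidHom.toZModLinearMap 2
    (MonoidHom.toAdditiveRight ((Units.map (MonoidAlgebra.of (ZMod 2) _)).comp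
      (toUnits.toMonoidHom : Multiplicative (Fin k → ZMod 2) →* _)))

theorem gj_val (k : ℕ) (v : Fin k → ZMod 2) :
    (((gj k v).toMul : (GA k)ˣ) : GA k) = MonoidAlgebra.single (Multiplicative.ofAdd v) 1 := rfl

theorem gj_inj (k : ℕ) : Function.Injective (gj k) := by
  intro v w h
  have h1 := congrArg (fun x => ((x.toMul : (GA k)ˣ) : GA k)) h
  simp only [gj_val] at h1
  have := MonoidAlgebra.of_injective (R := ZMod 2) (M := Multiplicative (Fin k → ZMod 2)) h1
  exact this

theorem gbasis (k : ℕ) : ∃ (b : Module.Basis (Fin (2 ^ k - 1)) (ZMod 2) (Additive (GA k)ˣ))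
    (σ : Fin k ↪ Fin (2 ^ k - 1)), ∀ i, b (σ i) = gj k (stdBasis k i) := by
  have hli : LinearIndependent (ZMod 2) (fun i => gj k (stdBasis k i)) := by
    have h := (Pi.basisFun (ZMod 2) (Fin k)).linearIndependent.map' (gj k)
      (LinearMap.ker_eq_bot.2 (gj_inj k))
    have e : (fun i => gj k (stdBasis k i)) = gj k ∘ Pi.basisFun (ZMod 2) (Fin k) := by
      funext i
      simp only [Function.comp]
      congr 1
      ext m
      simp [stdBasis, Pi.single_apply]
    rw [e]
    exact h
  let b0 := Module.Basis.sumExtend hli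
  have : Finite (Fin k ⊕ Module.Basis.sumExtendIndex hli) := Module.Finite.finite_basis b0
  have := Fintype.ofFinite (Fin k ⊕ Module.Basis.sumExtendIndex hli)
  have hc := Module.finrank_eq_card_basis b0
  rw [gu_finrank] at hc
  let e : (Fin k ⊕ Module.Basis.sumExtendIndex hli) ≃ Fin (2 ^ k - 1) :=
    Fintype.equivFinOfCardEq hc.symm
  refine ⟨b0.reindex e, ⟨fun i => e (Sum.inl i), fun i j h => ?_⟩, fun i => ?_⟩
  · simpa using h
  · change b0.reindex e (e (Sum.inl i)) = _
    rw [Module.Basis.reindex_apply, Equiv.symm_apply_apply]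
    simp [b0, Module.Basis.sumExtend]
    rfl

theorem quad_id (R : Type*) [CommRing R] (h2 : (2 : R) = 0) (x y w : R) (hx : x * x = 0)
    (hy : y * y = 0) (hw : w * w = 0) :
    1 + (x + y + w) = (1 + (x + y)) * (1 + (x + w)) * (1 + (y + w)) * (1 + x) * (1 + y) * (1 + w) := by
  grind

theorem part2 (k : ℕ) (hk : 3 ≤ k) : ∃ f : QV (2 ^ k - 1) ≃ QV (2 ^ k - 1),
      permGate (2 ^ k - 1) f ∈ CliffordLevel (2 ^ k - 1) 3 ∧
      ∃ (m : Fin (2 ^ k - 1)) (T : Finset (Fin (2 ^ k - 1))),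
        T.card = k ∧ mlCoeff (2 ^ k - 1) (fun v => f v m) T ≠ 0 := by
  obtain ⟨b, σ, hb⟩ := gbasis k
  generalize hn : 2 ^ k - 1 = n at *
  let ψ : QV n ≃ₗ[ZMod 2] GI k := LinearEquiv.ofFinrankEq _ _ (by rw [GI_finrank, hn]; simp)
  let φ : QV n ≃ₗ[ZMod 2] Additive (GA k)ˣ := b.equivFun.symm
  let f : QV n ≃ QV n := ((φ.toEquiv.trans Additive.toMul).trans (gUnits k).symm).trans
    ψ.symm.toEquiv
  let E : QV n → GA k := fun x => 1 + (ψ x : GA k)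
  have hE : ∀ x y, E x = E y → x = y := by
    intro x y h
    exact ψ.injective (Subtype.ext (add_left_cancel h))
  have hEf : ∀ v, E (f v) = ((φ v).toMul : (GA k)ˣ) := by
    intro v
    have : ψ (f v) = (gUnits k).symm (φ v).toMul := by simp [f]
    simp only [E]
    rw [this, ← gUnits_val]; simp
  have hEs : ∀ x, (((φ (f.symm x)).toMul : (GA k)ˣ) : GA k) = E x := by
    intro x; rw [← hEf]; simp
  have hEadd : ∀ x y, E (f (x + y)) = E (f x) * E (f y) := by
    intro x y
    rw [hEf, hEf, hEf, map_add]; rfl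
  have t2 := ga_two k
  refine ⟨f, c3_of n f ?_ ?_, ?_⟩
  · intro u x w
    apply hE
    have h1 : ∀ a b c, E (a + b + c) = E a + E b + E c := by
      intro a b c
      simp only [E, map_add, Submodule.coe_add]
      linear_combination -t2
    have h2 : ∀ a b, E (a + b) = E a + E b + E 0 := by
      intro a b
      simp only [E, map_add, map_zero, Submodule.coe_add, Submodule.coe_zero]
      linear_combination -t2
    rw [h1]
    simp only [hEadd, Equiv.apply_symm_apply]
    rw [h2]; ring
  · intro x y w
    apply φ.injective
    apply Additive.toMul.injective
    apply Units.ext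
    simp only [map_add, toMul_add, Units.val_mul, hEs]
    have h0 : E 0 = 1 := by simp [E]
    rw [h0, mul_one]
    simp only [E, map_add, Submodule.coe_add]
    exact quad_id _ t2 _ _ _ (GI_sq k _) (GI_sq k _) (GI_sq k _)
  · suffices h : vCoeff n f (Finset.univ.map σ) ≠ 0 by
      obtain ⟨m, hm⟩ := Function.ne_iff.1 h
      refine ⟨m, Finset.univ.map σ, by simp, ?_⟩
      simpa [vCoeff, mlCoeff, Finset.sum_apply] using hm
    have hv : vCoeff n f (Finset.univ.map σ) =
        ∑ R : Finset (Fin k), f (∑ i ∈ R, stdBasis n (σ i)) := by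
      unfold vCoeff
      rw [Finset.map_eq_image, Finset.powerset_image, Finset.sum_image]
      · simp only [Finset.powerset_univ]
        refine Finset.sum_congr rfl fun R _ => ?_
        rw [Finset.sum_image (fun _ _ _ _ h => σ.injective h)]
      · intro A _ B _ h
        exact Finset.image_injective σ.injective h
    intro h0
    rw [hv] at h0
    have hφ : ∀ R : Finset (Fin k), φ (∑ i ∈ R, stdBasis n (σ i)) =
        gj k (∑ i ∈ R, stdBasis k i) := by
      intro R
      rw [map_sum, map_sum]
      refine Finset.sum_congr rfl fun i _ => ?_
      rw [← hb]
      have : stdBasis n (σ i) = Pi.single (σ i) 1 := by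
        ext m; simp [stdBasis, Pi.single_apply]
      rw [this]
      simp [φ]
    have hψ : ∀ R : Finset (Fin k), (ψ (f (∑ i ∈ R, stdBasis n (σ i))) : GA k) =
        MonoidAlgebra.single (Multiplicative.ofAdd (∑ i ∈ R, stdBasis k i)) 1 + 1 := by
      intro R
      have := hEf (∑ i ∈ R, stdBasis n (σ i))
      rw [hφ, gj_val] at this
      rw [← this]
      simp only [E]
      linear_combination -t2
    have h1 := congrArg (fun x => ((ψ x : GI k) : GA k).coeff
      (Multiplicative.ofAdd (fun _ => 1))) h0
    have hstd : ∀ (R : Finset (Fin k)) (j : Fin k), (∑ i ∈ R, stdBasis k i) j =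
        if j ∈ R then 1 else 0 := by
      intro R j
      simp [stdBasis, Finset.sum_apply]
    have hval : ∀ R : Finset (Fin k), (MonoidAlgebra.single (Multiplicative.ofAdd
        (∑ i ∈ R, stdBasis k i)) 1 + 1 : GA k).coeff (Multiplicative.ofAdd (fun _ => 1)) =
        if R = Finset.univ then 1 else 0 := by
      intro R
      have e1 : (Multiplicative.ofAdd (∑ i ∈ R, stdBasis k i) =
          Multiplicative.ofAdd (fun _ => (1 : ZMod 2))) ↔ R = Finset.univ := by
        rw [Multiplicative.ofAdd.injective.eq_iff, funext_iff]
        simp only [hstd]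
        constructor
        · intro h
          ext j
          have := h j
          by_contra hj
          simp at hj
          simp [hj] at this
        · rintro rfl; simp
      have e2 : (1 : Multiplicative (Fin k → ZMod 2)) ≠ Multiplicative.ofAdd (fun _ => 1) := by
        intro h
        have := congrFun (congrArg Multiplicative.toAdd h) ⟨0, by omega⟩
        simp at this
      rw [MonoidAlgebra.one_def, MonoidAlgebra.coeff_add, Finsupp.add_apply,
        MonoidAlgebra.coeff_single, MonoidAlgebra.coeff_single, Finsupp.single_apply,
        Finsupp.single_apply, if_neg e2, add_zero]
      simp only [e1]
    simp only [map_sum, Submodule.coe_sum, hψ, MonoidAlgebra.coeff_sum, Finsupp.finsetSum_apply,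
      hval] at h1
    simp at h1

/-- A `𝒞₃` permutation gate with a monomial of degree at least `k` in its
polynomial representation needs at least `2ᵏ−1` qubits; for `k ≥ 3` the bound is attained. -/
theorem stmt6 :
    (∀ (k n : ℕ), 1 ≤ k → 1 ≤ n → ∀ f : QV n ≃ QV n,
      permGate n f ∈ CliffordLevel n 3 →
      (∃ (m : Fin n) (T : Finset (Fin n)),
        k ≤ T.card ∧ mlCoeff n (fun v => f v m) T ≠ 0) →
      2 ^ k - 1 ≤ n) ∧
    (∀ k : ℕ, 3 ≤ k → ∃ f : QV (2 ^ k - 1) ≃ QV (2 ^ k - 1),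
      permGate (2 ^ k - 1) f ∈ CliffordLevel (2 ^ k - 1) 3 ∧
      ∃ (m : Fin (2 ^ k - 1)) (T : Finset (Fin (2 ^ k - 1))),
        T.card = k ∧ mlCoeff (2 ^ k - 1) (fun v => f v m) T ≠ 0) := by
  refine ⟨fun k n _ _ f hf h => ?_, part2⟩
  obtain ⟨m, T, hk, hT⟩ := h
  exact part1 k n f hf m T hk hT
end

section
/- For any invertible n×n matrix M over 𝔽₂ and any vector w ∈ 𝔽₂ⁿ, the permutation gate sending |v⟩ to |Mv + w⟩ is a Clifford gate. Conversely, every permutation gate that is Clifford is of this form for some invertible M and some w. -/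
/-- The sign character of `𝔽₂`. -/
noncomputable def sgnChar (x : ZMod 2) : ℂ := (-1 : ℂ) ^ x.val

lemma sgnChar_add (x y : ZMod 2) : sgnChar (x + y) = sgnChar x * sgnChar y := by
  unfold sgnChar
  rw [ZMod.val_add, ← neg_one_pow_eq_pow_mod_two, pow_add]

lemma sgnChar_natCast (m : ℕ) : sgnChar (m : ZMod 2) = (-1 : ℂ) ^ m := by
  unfold sgnChar
  rw [ZMod.val_natCast, ← neg_one_pow_eq_pow_mod_two]

lemma sign_eq (n : ℕ) (z b : QV n) :
    (-1 : ℂ) ^ (∑ i, (z i).val * (b i).val) = sgnChar (z ⬝ᵥ b) := by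
  rw [← sgnChar_natCast]
  congr 1
  simp [dotProduct]

lemma permGate_conj (n : ℕ) (f : QV n ≃ QV n) (P : QMat n) (a b : QV n) :
    (permGate n f * P * star (permGate n f)) a b = P (f.symm a) (f.symm b) := by
  have h : ∀ x y, (x = f y) ↔ (y = f.symm x) := fun x y => by
    rw [Equiv.eq_symm_apply, eq_comm]
  simp only [Matrix.mul_apply, permGate, Matrix.star_apply, h]
  simp

lemma permGate_unitary (n : ℕ) (f : QV n ≃ QV n) :
    permGate n f ∈ Matrix.unitaryGroup (QV n) ℂ := by
  rw [Matrix.mem_unitaryGroup_iff]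
  have h := permGate_conj n f 1
  ext a b
  rw [Matrix.mul_one] at h
  rw [h, Matrix.one_apply, Matrix.one_apply]
  simp

theorem stmt12_fwd (n : ℕ) (M : Matrix (Fin n) (Fin n) (ZMod 2)) (hM : IsUnit M) (w : QV n) :
      ∃ f : QV n ≃ QV n, (∀ v, f v = M.mulVec v + w) ∧
        permGate n f ∈ CliffordLevel n 2 := by
  obtain ⟨U, rfl⟩ := hM
  set M := (U : Matrix (Fin n) (Fin n) (ZMod 2)) with hMdef
  set N := ((U⁻¹ : _ˣ) : Matrix (Fin n) (Fin n) (ZMod 2)) with hNdef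
  have hMN : M * N = 1 := U.mul_inv
  have hNM : N * M = 1 := U.inv_mul
  let f : QV n ≃ QV n :=
    { toFun := fun v => M.mulVec v + w
      invFun := fun v => N.mulVec (v - w)
      left_inv := fun v => by simp [Matrix.mulVec_mulVec, hNM]
      right_inv := fun v => by simp [Matrix.mulVec_mulVec, hMN] }
  refine ⟨f, fun v => rfl, permGate_unitary n f, ?_⟩
  rintro P ⟨c, u, z, hc, rfl⟩
  have hcases : sgnChar (z ⬝ᵥ N.mulVec (-w)) = 1 ∨ sgnChar (z ⬝ᵥ N.mulVec (-w)) = -1 := by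
    unfold sgnChar
    exact neg_one_pow_eq_or ℂ _
  refine ⟨c * sgnChar (z ⬝ᵥ N.mulVec (-w)), M.mulVec u, Matrix.vecMul z N, ?_, ?_⟩
  · rcases hcases with h | h <;> rw [h] <;> rcases hc with h | h | h | h <;> simp [h]
  · ext a b
    rw [permGate_conj]
    simp only [Matrix.smul_apply, XZGate, sign_eq, smul_eq_mul]
    have hiff : (f.symm a = f.symm b + u) ↔ (a = b + M.mulVec u) := by
      rw [Equiv.symm_apply_eq]
      have : f (f.symm b + u) = b + M.mulVec u := by
        have h2 : f (f.symm b) = b := f.apply_symm_apply b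
        change M.mulVec (f.symm b) + w = b at h2
        change M.mulVec (f.symm b + u) + w = _
        rw [Matrix.mulVec_add, add_right_comm, h2]
      rw [this]
    have hs : z ⬝ᵥ (f.symm b) = z ⬝ᵥ N.mulVec (-w) + Matrix.vecMul z N ⬝ᵥ b := by
      change z ⬝ᵥ N.mulVec (b - w) = _
      rw [sub_eq_add_neg, Matrix.mulVec_add, dotProduct_add, Matrix.dotProduct_mulVec z N b, add_comm]
    simp only [hiff, hs, sgnChar_add]
    split_ifs <;> ring

theorem stmt12_bwd (n : ℕ) (f : QV n ≃ QV n) (hf : permGate n f ∈ CliffordLevel n 2) :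
      ∃ (M : Matrix (Fin n) (Fin n) (ZMod 2)) (w : QV n),
        IsUnit M ∧ ∀ v, f v = M.mulVec v + w := by
  have key : ∀ u, ∃ u', ∀ v, f (v + u) = f v + u' := by
    intro u
    obtain ⟨c, u', z', -, h⟩ := hf.2 ((1 : ℂ) • XZGate n u 0) ⟨1, u, 0, Or.inl rfl, rfl⟩
    refine ⟨u', fun v => ?_⟩
    have h1 := congrFun (congrFun h (f (v + u))) (f v)
    rw [permGate_conj] at h1
    by_contra hne
    simp [XZGate, hne] at h1
  have hadd : ∀ v u, f (v + u) - f 0 = (f v - f 0) + (f u - f 0) := by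
    intro v u
    obtain ⟨u', h⟩ := key u
    have h0 := h 0
    rw [zero_add] at h0
    rw [h v, h0]
    abel
  let g : QV n →+ QV n := AddMonoidHom.mk' (fun v => f v - f 0) hadd
  let L : QV n →ₗ[ZMod 2] QV n := g.toZModLinearMap 2
  have hL : ∀ v, (LinearMap.toMatrix' L).mulVec v = f v - f 0 := fun v => by
    rw [LinearMap.toMatrix'_mulVec]; rfl
  refine ⟨LinearMap.toMatrix' L, f 0, ?_, fun v => by rw [hL]; simp⟩
  rw [← Matrix.mulVec_injective_iff_isUnit]
  intro a b hab
  simp only [hL] at hab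
  exact f.injective (sub_left_injective hab)

/-- For invertible `M` over `𝔽₂` and any `w`, the permutation gate
`|v⟩ ↦ |Mv + w⟩` is Clifford; conversely every Clifford permutation gate has this form. -/
theorem stmt12 (n : ℕ) (hn : 1 ≤ n) :
    (∀ M : Matrix (Fin n) (Fin n) (ZMod 2), IsUnit M → ∀ w : QV n,
      ∃ f : QV n ≃ QV n, (∀ v, f v = M.mulVec v + w) ∧
        permGate n f ∈ CliffordLevel n 2) ∧
    (∀ f : QV n ≃ QV n, permGate n f ∈ CliffordLevel n 2 →
      ∃ (M : Matrix (Fin n) (Fin n) (ZMod 2)) (w : QV n),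
        IsUnit M ∧ ∀ v, f v = M.mulVec v + w) := by
  exact ⟨fun M hM w => stmt12_fwd n M hM w, fun f hf => stmt12_bwd n f hf⟩
end
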